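/- Let n ≥ 1, let K ⊆ ℝⁿ be a convex body, σ > 0, and 0 < α < 1. Then (∫_K e^{−(1−α)‖x‖²/(2σ²)} dx) · (∫_K e^{−(1+α)‖x‖²/(2σ²)} dx) ≤ (1/(1−α²))^{n+1} · (∫_K e^{−‖x‖²/(2σ²)} dx)². -/

import Mathlib

open MeasureTheory

/-- One-dimensional Brunn–Minkowski inequality for compact sets. -/
lemma volume_add_volume_le_of_isCompact {A B C : Set ℝ} (hA : IsCompact A) (hB : IsCompact B)
    (hA' : A.Nonempty) (hB' : B.Nonempty) (hC : ∀ x ∈ A, ∀ y ∈ B, x + y ∈ C) :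
    volume A + volume B ≤ volume C := by
  obtain ⟨a, haA, ha⟩ := hA.exists_isGreatest hA'
  obtain ⟨b, hbB, hb⟩ := hB.exists_isLeast hB'
  have hmeas : MeasurableSet ((fun y => a + y) '' B) :=
    (hB.image (continuous_const_add a)).measurableSet
  have hinter : volume (((fun x => x + b) '' A) ∩ ((fun y => a + y) '' B)) = 0 := by
    refine measure_mono_null (t := {a + b}) ?_ Real.volume_singleton
    rintro _ ⟨⟨x, hx, rfl⟩, ⟨y, hy, hxy⟩⟩
    have h₁ := ha hx
    have h₂ := hb hy
    simp only [Set.mem_singleton_iff] at hxy ⊢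
    linarith
  have hunion := measure_union_add_inter (μ := volume) ((fun x => x + b) '' A) hmeas
  rw [hinter, add_zero, Set.image_add_right, Set.image_add_left,
    measure_preimage_add_right, measure_preimage_add] at hunion
  rw [← hunion, ← Set.image_add_right, ← Set.image_add_left]
  refine measure_mono ?_
  rintro _ (⟨x, hx, rfl⟩ | ⟨y, hy, rfl⟩)
  · exact hC x hx b hbB
  · exact hC a haA y hy

/-- One-dimensional Brunn–Minkowski inequality for measurable sets. -/
lemma volume_add_volume_le {A B C : Set ℝ} (hA : MeasurableSet A) (hB : MeasurableSet B)
    (hA' : A.Nonempty) (hB' : B.Nonempty) (hC : ∀ x ∈ A, ∀ y ∈ B, x + y ∈ C) :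
    volume A + volume B ≤ volume C := by
  have hcpt : ∀ K ⊆ A, IsCompact K → ∀ L ⊆ B, IsCompact L →
      volume K + volume L ≤ volume C := by
    intro K hKA hK L hLB hL
    obtain ⟨a, ha⟩ := hA'
    obtain ⟨b, hb⟩ := hB'
    refine (add_le_add (measure_mono (Set.subset_insert a K))
      (measure_mono (Set.subset_insert b L))).trans
      (volume_add_volume_le_of_isCompact (hK.insert a) (hL.insert b) (Set.insert_nonempty a K)
        (Set.insert_nonempty b L) fun x hx y hy => hC x ?_ y ?_)
    · exact Set.insert_subset ha hKA hx
    · exact Set.insert_subset hb hLB hy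
  rw [hA.measure_eq_iSup_isCompact volume, hB.measure_eq_iSup_isCompact volume]
  simp only [iSup_and']
  exact ENNReal.biSup_add_biSup_le' ⟨∅, Set.empty_subset A, isCompact_empty⟩
    ⟨∅, Set.empty_subset B, isCompact_empty⟩ fun K hK L hL => hcpt K hK.1 hK.2 L hL.1 hL.2

/-- Layer-cake formula for functions bounded by one. -/
lemma lintegral_eq_lintegral_volume_ofReal_lt {f : ℝ → ENNReal} (hf : Measurable f)
    (hf1 : ∀ x, f x ≤ 1) :
    ∫⁻ x, f x = ∫⁻ t in Set.Ioi (0 : ℝ), volume {x | ENNReal.ofReal t < f x} := by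
  have hfin : ∀ x, f x ≠ ⊤ := fun x => ((hf1 x).trans_lt ENNReal.one_lt_top).ne
  have h := lintegral_eq_lintegral_meas_lt (f := fun x => (f x).toReal) volume
    (Filter.Eventually.of_forall fun x => ENNReal.toReal_nonneg) hf.ennreal_toReal.aemeasurable
  simp only [ENNReal.ofReal_toReal (hfin _)] at h
  rw [h]
  refine setLIntegral_congr_fun measurableSet_Ioi fun t ht => ?_
  simp only [ENNReal.ofReal_lt_iff_lt_toReal (le_of_lt ht) (hfin _)]

/-- Additive form of the one-dimensional Prékopa–Leindler inequality, for functions with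
supremum one. -/
lemma lintegral_add_lintegral_le_of_iSup_eq_one {f g h : ℝ → ENNReal} (hf : Measurable f)
    (hg : Measurable g) (hh : Measurable h) (hf1 : ⨆ x, f x = 1) (hg1 : ⨆ x, g x = 1)
    (hfg : ∀ x y, f x * g y ≤ h (x + y) ^ 2) :
    (∫⁻ x, f x) + ∫⁻ x, g x ≤ ∫⁻ x, h x := by
  have hfle : ∀ x, f x ≤ 1 := fun x => hf1 ▸ le_iSup f x
  have hgle : ∀ x, g x ≤ 1 := fun x => hg1 ▸ le_iSup g x
  refine le_trans ?_ (lintegral_mono fun x => min_le_left (h x) 1)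
  rw [lintegral_eq_lintegral_volume_ofReal_lt hf hfle,
    lintegral_eq_lintegral_volume_ofReal_lt hg hgle,
    lintegral_eq_lintegral_volume_ofReal_lt (hh.min measurable_const) fun x => min_le_right _ _]
  refine (le_lintegral_add _ _).trans (lintegral_mono fun t => ?_)
  rcases lt_or_ge (ENNReal.ofReal t) 1 with ht | ht
  · refine volume_add_volume_le (measurableSet_lt measurable_const hf)
      (measurableSet_lt measurable_const hg) (lt_iSup_iff.1 (ht.trans_eq hf1.symm))
      (lt_iSup_iff.1 (ht.trans_eq hg1.symm)) fun x hx y hy => lt_min ?_ ht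
    refine lt_of_pow_lt_pow_left' 2 (lt_of_lt_of_le ?_ (hfg x y))
    rw [sq]
    exact ENNReal.mul_lt_mul hx hy
  · have hempty : ∀ {φ : ℝ → ENNReal}, (∀ x, φ x ≤ 1) → {x | ENNReal.ofReal t < φ x} = ∅ :=
      fun hφ => Set.eq_empty_of_forall_notMem fun x hx => absurd (hφ x) (ht.trans_lt hx).not_ge
    simp [hempty hfle, hempty hgle]

/-- The inequality of arithmetic and geometric means in `ENNReal`. -/
lemma ENNReal.four_mul_mul_le_add_sq (a b : ENNReal) : 4 * a * b ≤ (a + b) ^ 2 := by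
  wlog hab : a ≤ b generalizing a b
  · simpa only [mul_right_comm, add_comm] using this b a (le_of_not_ge hab)
  obtain ⟨d, rfl⟩ := exists_add_of_le hab
  calc 4 * a * (a + d) ≤ 4 * a * (a + d) + d ^ 2 := le_self_add
    _ = (a + (a + d)) ^ 2 := by ring

/-- One-dimensional Prékopa–Leindler inequality for bounded functions. -/
lemma four_mul_lintegral_mul_lintegral_le_of_bounded {f g h : ℝ → ENNReal} (hf : Measurable f)
    (hg : Measurable g) (hh : Measurable h) (hftop : ⨆ x, f x ≠ ⊤) (hgtop : ⨆ x, g x ≠ ⊤)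
    (hfg : ∀ x y, f x * g y ≤ h (x + y) ^ 2) :
    4 * (∫⁻ x, f x) * (∫⁻ x, g x) ≤ (∫⁻ x, h x) ^ 2 := by
  rcases eq_or_ne (⨆ x, f x) 0 with hf0 | hf0
  · simp [ENNReal.iSup_eq_zero.1 hf0]
  rcases eq_or_ne (⨆ x, g x) 0 with hg0 | hg0
  · simp [ENNReal.iSup_eq_zero.1 hg0]
  set a := ⨆ x, f x
  set b := ⨆ x, g x
  obtain ⟨s, hs⟩ : ∃ s : ENNReal, s ^ 2 = a * b :=
    ⟨(a * b) ^ (1 / 2 : ℝ), by rw [← ENNReal.rpow_natCast, ← ENNReal.rpow_mul]; norm_num⟩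
  have hab0 : a * b ≠ 0 := mul_ne_zero hf0 hg0
  have habtop : a * b ≠ ⊤ := ENNReal.mul_ne_top hftop hgtop
  have hinv : a⁻¹ * b⁻¹ = s⁻¹ ^ 2 := by
    rw [← ENNReal.inv_pow, hs, ENNReal.mul_inv (Or.inl hf0) (Or.inl hftop)]
  have key := lintegral_add_lintegral_le_of_iSup_eq_one (f := fun x => a⁻¹ * f x)
    (g := fun x => b⁻¹ * g x) (h := fun x => s⁻¹ * h x) (hf.const_mul _) (hg.const_mul _)
    (hh.const_mul _) (by rw [← ENNReal.mul_iSup, ENNReal.inv_mul_cancel hf0 hftop])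
    (by rw [← ENNReal.mul_iSup, ENNReal.inv_mul_cancel hg0 hgtop]) fun x y => by
      rw [mul_mul_mul_comm, hinv, mul_pow]
      gcongr
      exact hfg x y
  rw [lintegral_const_mul _ hf, lintegral_const_mul _ hg, lintegral_const_mul _ hh] at key
  have hsq := (ENNReal.four_mul_mul_le_add_sq (a⁻¹ * ∫⁻ x, f x) (b⁻¹ * ∫⁻ x, g x)).trans
    (pow_le_pow_left' key 2)
  have hrw : 4 * (a⁻¹ * ∫⁻ x, f x) * (b⁻¹ * ∫⁻ x, g x) =
      (a * b)⁻¹ * (4 * (∫⁻ x, f x) * (∫⁻ x, g x)) := by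
    rw [ENNReal.mul_inv (Or.inl hf0) (Or.inl hftop)]
    ring
  rw [hrw, mul_pow, ← hinv, ← ENNReal.mul_inv (Or.inl hf0) (Or.inl hftop)] at hsq
  exact (ENNReal.mul_le_mul_iff_right (ENNReal.inv_ne_zero.2 habtop)
    (ENNReal.inv_ne_top.2 hab0)).1 hsq

/-- The integral is the supremum of the integrals of truncations. -/
lemma lintegral_eq_iSup_lintegral_min_natCast {f : ℝ → ENNReal} (hf : Measurable f) :
    ∫⁻ x, f x = ⨆ N : ℕ, ∫⁻ x, min (f x) N := by
  rw [← lintegral_iSup (fun N => hf.min measurable_const)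
    fun M N hMN x => min_le_min_left _ (by exact_mod_cast hMN)]
  refine lintegral_congr fun x => ?_
  rw [← inf_iSup_eq, ENNReal.iSup_natCast, inf_top_eq]

/-- One-dimensional Prékopa–Leindler inequality. -/
lemma four_mul_lintegral_mul_lintegral_le {f g h : ℝ → ENNReal} (hf : Measurable f)
    (hg : Measurable g) (hh : Measurable h) (hfg : ∀ x y, f x * g y ≤ h (x + y) ^ 2) :
    4 * (∫⁻ x, f x) * (∫⁻ x, g x) ≤ (∫⁻ x, h x) ^ 2 := by
  have hbdd : ∀ (φ : ℝ → ENNReal) (N : ℕ), ⨆ x, min (φ x) N ≠ ⊤ := fun φ N =>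
    ((iSup_le fun x => min_le_right (φ x) (N : ENNReal)).trans_lt (ENNReal.natCast_lt_top N)).ne
  rw [lintegral_eq_iSup_lintegral_min_natCast hf, lintegral_eq_iSup_lintegral_min_natCast hg,
    ENNReal.mul_iSup, ENNReal.mul_iSup]
  refine iSup_le fun N => ?_
  rw [ENNReal.iSup_mul]
  refine iSup_le fun M => ?_
  exact four_mul_lintegral_mul_lintegral_le_of_bounded (hf.min measurable_const)
    (hg.min measurable_const) hh (hbdd f M) (hbdd g N) fun x y =>
      (mul_le_mul' (min_le_left _ _) (min_le_left _ _)).trans (hfg x y)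

/-- Prékopa–Leindler inequality on `Fin n → ℝ` with equal weights, in unnormalized form. -/
theorem four_pow_mul_lintegral_mul_lintegral_le {n : ℕ} {f g h : (Fin n → ℝ) → ENNReal}
    (hf : Measurable f) (hg : Measurable g) (hh : Measurable h)
    (hfg : ∀ x y, f x * g y ≤ h (x + y) ^ 2) :
    4 ^ n * (∫⁻ x, f x) * (∫⁻ x, g x) ≤ (∫⁻ x, h x) ^ 2 := by
  induction n with
  | zero =>
    have huniv : volume (Set.univ : Set (Fin 0 → ℝ)) = 1 := by simp [volume_pi]
    simp only [lintegral_unique, huniv, mul_one, pow_zero, one_mul]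
    exact (hfg _ _).trans_eq (congrArg (h · ^ 2) (Subsingleton.elim _ _))
  | succ n ih =>
    let e := MeasurableEquiv.piFinSuccAbove (fun _ : Fin (n + 1) => ℝ) 0
    have he : MeasurePreserving e.symm volume volume :=
      (volume_preserving_piFinSuccAbove (fun _ : Fin (n + 1) => ℝ) 0).symm
    have hadd : ∀ s t u v, e.symm (s, u) + e.symm (t, v) = e.symm (s + t, u + v) := by
      intro s t u v
      rw [MeasurableEquiv.eq_symm_apply]
      rfl
    have hfub : ∀ {φ : (Fin (n + 1) → ℝ) → ENNReal}, Measurable φ →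
        ∫⁻ x, φ x = ∫⁻ s, ∫⁻ u, φ (e.symm (s, u)) := fun {φ} hφ => by
      rw [← he.lintegral_comp_emb e.symm.measurableEmbedding]
      exact lintegral_prod _ (hφ.comp e.symm.measurable).aemeasurable
    have hmeas : ∀ {φ : (Fin (n + 1) → ℝ) → ENNReal}, Measurable φ →
        Measurable fun s => ∫⁻ u, φ (e.symm (s, u)) := fun hφ =>
      (hφ.comp e.symm.measurable).lintegral_prod_right'
    have hsec : ∀ {φ : (Fin (n + 1) → ℝ) → ENNReal}, Measurable φ →
        ∀ s, Measurable fun u => φ (e.symm (s, u)) := fun hφ s =>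
      hφ.comp (e.symm.measurable.comp measurable_prodMk_left)
    have key := four_mul_lintegral_mul_lintegral_le ((hmeas hf).const_mul (4 ^ n)) (hmeas hg)
      (hmeas hh) fun s t => ih (hsec hf s) (hsec hg t) (hsec hh (s + t)) fun u v => by
        rw [← hadd]
        exact hfg _ _
    rw [lintegral_const_mul _ (hmeas hf), ← hfub hf, ← hfub hg, ← hfub hh] at key
    rwa [pow_succ', mul_assoc 4]

/-- Prékopa–Leindler inequality for integrable real functions on Euclidean space. -/
theorem four_pow_mul_integral_mul_integral_le {n : ℕ} {f g h : EuclideanSpace ℝ (Fin n) → ℝ}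
    (hf : Measurable f) (hg : Measurable g) (hh : Measurable h)
    (hfi : Integrable f) (hgi : Integrable g) (hhi : Integrable h)
    (hf0 : 0 ≤ f) (hg0 : 0 ≤ g) (hh0 : 0 ≤ h) (hfg : ∀ x y, f x * g y ≤ h (x + y) ^ 2) :
    4 ^ n * (∫ x, f x) * (∫ x, g x) ≤ (∫ x, h x) ^ 2 := by
  have hL : ∀ {φ : EuclideanSpace ℝ (Fin n) → ℝ}, Integrable φ → 0 ≤ φ →
      ENNReal.ofReal (∫ x, φ x) = ∫⁻ u : Fin n → ℝ, ENNReal.ofReal (φ (WithLp.toLp 2 u)) :=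
    fun {φ} hφ hφ0 => by
      rw [ofReal_integral_eq_lintegral_ofReal hφ (Filter.Eventually.of_forall hφ0)]
      exact ((PiLp.volume_preserving_toLp (Fin n)).lintegral_comp_emb
        (MeasurableEquiv.toLp 2 (Fin n → ℝ)).measurableEmbedding
        fun x => ENNReal.ofReal (φ x)).symm
  have hM : ∀ {φ : EuclideanSpace ℝ (Fin n) → ℝ}, Measurable φ →
      Measurable fun u : Fin n → ℝ => ENNReal.ofReal (φ (WithLp.toLp 2 u)) := fun hφ =>
    (hφ.comp (MeasurableEquiv.toLp 2 (Fin n → ℝ)).measurable).ennreal_ofReal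
  have key := four_pow_mul_lintegral_mul_lintegral_le (hM hf) (hM hg) (hM hh) fun u v => by
    rw [← ENNReal.ofReal_mul (hf0 _), ← ENNReal.ofReal_pow (hh0 _)]
    exact ENNReal.ofReal_le_ofReal (hfg _ _)
  rw [← hL hfi hf0, ← hL hgi hg0, ← hL hhi hh0, ← ENNReal.ofReal_pow (integral_nonneg hh0),
    show (4 : ENNReal) ^ n = ENNReal.ofReal (4 ^ n) by simp [ENNReal.ofReal_pow],
    ← ENNReal.ofReal_mul (by positivity),
    ← ENNReal.ofReal_mul (mul_nonneg (by positivity) (integral_nonneg hf0))] at key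
  exact (ENNReal.ofReal_le_ofReal_iff (by positivity)).1 key

/-- For positive weights `a`, `b`, the Gaussian integrals over a convex body satisfy
logconcavity of `t ↦ t ^ n * ∫ x in K, exp (-t * c * ‖x‖ ^ 2)` at the midpoint of `a` and `b`. -/
theorem pow_mul_integral_exp_mul_pow_mul_integral_exp_le {n : ℕ}
    {K : Set (EuclideanSpace ℝ (Fin n))} (hKconv : Convex ℝ K) (hKcomp : IsCompact K)
    {a b c : ℝ} (ha : 0 < a) (hb : 0 < b) (hab : a + b = 2) (hc : 0 ≤ c) :
    (a ^ n * ∫ x in K, Real.exp (-(a * c * ‖x‖ ^ 2))) *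
      (b ^ n * ∫ x in K, Real.exp (-(b * c * ‖x‖ ^ 2))) ≤
    (∫ x in K, Real.exp (-(c * ‖x‖ ^ 2))) ^ 2 := by
  let φ : ℝ → EuclideanSpace ℝ (Fin n) → ℝ := fun t =>
    K.indicator fun x => Real.exp (-(t * ‖x‖ ^ 2))
  have hK := hKcomp.measurableSet
  have hcont : ∀ t : ℝ, Continuous fun x : EuclideanSpace ℝ (Fin n) =>
      Real.exp (-(t * ‖x‖ ^ 2)) := fun t => by fun_prop
  have hmeas : ∀ t, Measurable (φ t) := fun t => (hcont t).measurable.indicator hK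
  have hint : ∀ t, Integrable (φ t) := fun t =>
    ((hcont t).continuousOn.integrableOn_compact hKcomp).integrable_indicator hK
  have hnonneg : ∀ t, 0 ≤ φ t := fun t => Set.indicator_nonneg fun x _ => (Real.exp_pos _).le
  have hscale : ∀ t {r : ℝ}, 0 < r → ∫ x, φ t (r⁻¹ • x) =
      r ^ n * ∫ x in K, Real.exp (-(t * ‖x‖ ^ 2)) := fun t r hr => by
    rw [Measure.integral_comp_inv_smul, integral_indicator hK, finrank_euclideanSpace_fin,
      abs_of_pos (pow_pos hr n), smul_eq_mul]
  have key := four_pow_mul_integral_mul_integral_le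
    (f := fun x => φ (a * c) (a⁻¹ • x)) (g := fun x => φ (b * c) (b⁻¹ • x))
    (h := fun x => φ c ((2 : ℝ)⁻¹ • x))
    ((hmeas _).comp (measurable_const_smul _)) ((hmeas _).comp (measurable_const_smul _))
    ((hmeas _).comp (measurable_const_smul _))
    ((hint _).comp_smul (inv_ne_zero ha.ne')) ((hint _).comp_smul (inv_ne_zero hb.ne'))
    ((hint _).comp_smul (by norm_num)) (fun x => hnonneg (a * c) (a⁻¹ • x))
    (fun x => hnonneg (b * c) (b⁻¹ • x)) (fun x => hnonneg c ((2 : ℝ)⁻¹ • x)) ?_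
  · rw [hscale _ ha, hscale _ hb, hscale _ two_pos, mul_pow, ← pow_mul, mul_comm n 2, pow_mul,
      show (2 : ℝ) ^ 2 = 4 by norm_num, mul_assoc] at key
    exact le_of_mul_le_mul_left key (by positivity)
  · intro x y
    obtain ⟨u, rfl⟩ : ∃ u, x = a • u := ⟨a⁻¹ • x, (smul_inv_smul₀ ha.ne' x).symm⟩
    obtain ⟨v, rfl⟩ : ∃ v, y = b • v := ⟨b⁻¹ • y, (smul_inv_smul₀ hb.ne' y).symm⟩
    simp only [inv_smul_smul₀ ha.ne', inv_smul_smul₀ hb.ne']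
    by_cases hu : u ∈ K
    swap
    · simp only [φ, Set.indicator_of_notMem hu, zero_mul]
      positivity
    by_cases hv : v ∈ K
    swap
    · simp only [φ, Set.indicator_of_notMem hv, mul_zero]
      positivity
    have hmid : (2 : ℝ)⁻¹ • (a • u + b • v) = (a / 2) • u + (b / 2) • v := by
      rw [smul_add, smul_smul, smul_smul]
      congr 2 <;> ring
    have hw : a / 2 + b / 2 = 1 := by linarith
    have hmem : (2 : ℝ)⁻¹ • (a • u + b • v) ∈ K :=
      hmid ▸ hKconv hu hv (by positivity) (by positivity) hw
    simp only [φ, Set.indicator_of_mem hu, Set.indicator_of_mem hv, Set.indicator_of_mem hmem]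
    rw [← Real.exp_add, ← Real.exp_nat_mul, Real.exp_le_exp, hmid]
    have hsq := (((convexOn_norm convex_univ).pow (fun x _ => norm_nonneg x) 2).2
      (Set.mem_univ u) (Set.mem_univ v) (by positivity) (by positivity) hw)
    simp only [Pi.pow_apply, smul_eq_mul] at hsq
    have := mul_le_mul_of_nonneg_left hsq hc
    push_cast
    linarith

/-- Logconcavity-based moment inequality: for a convex body `K`, `σ > 0`, and
`0 < α < 1`,
`(∫_K e^{-(1-α)‖x‖²/(2σ²)})·(∫_K e^{-(1+α)‖x‖²/(2σ²)}) ≤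
 (1/(1-α²))^{n+1}·(∫_K e^{-‖x‖²/(2σ²)})²`. -/
theorem gaussian_integral_logconcavity_bound
    (n : ℕ) (hn : 1 ≤ n)
    (K : Set (EuclideanSpace ℝ (Fin n)))
    (hKconv : Convex ℝ K) (hKcomp : IsCompact K) (hKint : (interior K).Nonempty)
    (σ α : ℝ) (hσ : 0 < σ) (hα0 : 0 < α) (hα1 : α < 1) :
    (∫ x in K, Real.exp (-(1 - α) * ‖x‖ ^ 2 / (2 * σ ^ 2))) *
      (∫ x in K, Real.exp (-(1 + α) * ‖x‖ ^ 2 / (2 * σ ^ 2))) ≤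
    (1 / (1 - α ^ 2)) ^ (n + 1) *
      (∫ x in K, Real.exp (-‖x‖ ^ 2 / (2 * σ ^ 2))) ^ 2 := by
  have key := pow_mul_integral_exp_mul_pow_mul_integral_exp_le hKconv hKcomp
    (a := 1 - α) (b := 1 + α) (c := 1 / (2 * σ ^ 2)) (by linarith) (by linarith) (by ring)
    (by positivity)
  have hrw : ∀ t s : ℝ, -(t * (1 / (2 * σ ^ 2)) * s ^ 2) = -t * s ^ 2 / (2 * σ ^ 2) :=
    fun t s => by ring
  have hrw' : ∀ s : ℝ, -(1 / (2 * σ ^ 2) * s ^ 2) = -s ^ 2 / (2 * σ ^ 2) := fun s => by ring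
  simp only [hrw, hrw'] at key
  rw [mul_mul_mul_comm, ← mul_pow, show (1 - α) * (1 + α) = 1 - α ^ 2 by ring] at key
  have hpos : 0 < 1 - α ^ 2 := by nlinarith
  calc _ ≤ (1 / (1 - α ^ 2)) ^ n *
        (∫ x in K, Real.exp (-‖x‖ ^ 2 / (2 * σ ^ 2))) ^ 2 := by
        rw [one_div_pow, one_div_mul_eq_div, le_div_iff₀' (pow_pos hpos n)]
        exact key
    _ ≤ _ := by
        gcongr
        · rw [le_div_iff₀ hpos]
          nlinarith
        · exact n.le_succ
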